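/- arXiv:1606.04850 — 2 statements merged into one kernel-verified Lean document; each statement's English description precedes it below -/
import Mathlib

section
/- The series ∑_{n=1}^∞ ζ(2n)/(n(2n+1)·16^n) equals 2G/π - 1 + log(π/2), where G is Catalan's constant. -/
open Real

noncomputable def catalanConst : ℝ := ∑' n : ℕ, (-1) ^ n / (2 * (n : ℝ) + 1) ^ 2

open MeasureTheory Set Filter Topology in
lemma ii_pow_log (n : ℕ) : IntervalIntegrable (fun t : ℝ => t ^ (2 * n) * Real.log t) volume 0 1 :=
  intervalIntegral.intervalIntegrable_log'.continuousOn_mul (by fun_prop)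

lemma int_pow_log (n : ℕ) : ∫ t in (0:ℝ)..1, t ^ (2 * n) * Real.log t = -(1 / (2 * (n:ℝ) + 1) ^ 2) := by
  have hn : (2 * (n:ℝ) + 1) ≠ 0 := by positivity
  rw [intervalIntegral.integral_eq_sub_of_hasDerivAt_of_le (f := fun t : ℝ =>
    t ^ (2 * n) * (t * Real.log t) / (2 * n + 1) - t ^ (2 * n + 1) / (2 * n + 1) ^ 2) zero_le_one ?_ ?_ (ii_pow_log n)]
  · simp
  · have := Real.continuous_mul_log
    apply Continuous.continuousOn
    fun_prop
  · intro x hx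
    have hx0 : x ≠ 0 := hx.1.ne'
    have h1 : HasDerivAt (fun t : ℝ => t ^ (2 * n + 1) * Real.log t / (2 * n + 1) - t ^ (2 * n + 1) / (2 * n + 1) ^ 2)
      (x ^ (2 * n) * Real.log x) x := by
      have h := (((hasDerivAt_pow (2 * n + 1) x).mul (Real.hasDerivAt_log hx0)).div_const (2 * (n:ℝ) + 1)).sub
        ((hasDerivAt_pow (2 * n + 1) x).div_const ((2 * (n:ℝ) + 1) ^ 2))
      refine HasDerivAt.congr_deriv h ?_
      push_cast
      try simp only [Nat.add_sub_cancel]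
      field_simp
      ring
    have e : ∀ t : ℝ, t ^ (2 * n + 1) * Real.log t = t ^ (2 * n) * (t * Real.log t) := fun t => by ring
    simpa only [e] using h1

lemma summable_odd : Summable (fun n : ℕ => 1 / (2 * (n:ℝ) + 1) ^ 2) := by
  have h := (summable_nat_add_iff 1).2 (Real.summable_one_div_nat_pow.2 (by norm_num : 1 < 2))
  refine Summable.of_nonneg_of_le (fun n => by positivity) (fun n => ?_) h
  push_cast
  gcongr
  have : (0:ℝ) ≤ n := by positivity
  linarith

open MeasureTheory Set in
lemma int_log_div : IntervalIntegrable (fun t : ℝ => Real.log t * (1 / (1 + t ^ 2))) volume 0 1 := by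
  refine intervalIntegral.intervalIntegrable_log'.mul_continuousOn ?_
  apply Continuous.continuousOn
  exact continuous_const.div (by fun_prop) (fun x => by positivity)

open MeasureTheory Set in
lemma int_catalan : ∫ t in (0:ℝ)..1, Real.log t * (1 / (1 + t ^ 2)) = -catalanConst := by
  have hI : ∀ n : ℕ, Integrable (fun t : ℝ => (-1) ^ n * (t ^ (2 * n) * Real.log t)) (volume.restrict (Ioc 0 1)) := by
    intro n
    have := (ii_pow_log n).const_mul ((-1) ^ n)
    rwa [intervalIntegrable_iff_integrableOn_Ioc_of_le zero_le_one] at this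
  have h := hasSum_integral_of_summable_integral_norm hI ?_
  · have e1 : ∀ n : ℕ, ∫ t in Ioc (0:ℝ) 1, (-1) ^ n * (t ^ (2 * n) * Real.log t) = -((-1) ^ n / (2 * (n : ℝ) + 1) ^ 2) := by
      intro n
      rw [← intervalIntegral.integral_of_le zero_le_one, intervalIntegral.integral_const_mul, int_pow_log]
      ring
    simp_rw [e1] at h
    rw [catalanConst, ← tsum_neg, h.tsum_eq, intervalIntegral.integral_of_le zero_le_one,
      integral_Ioc_eq_integral_Ioo, integral_Ioc_eq_integral_Ioo]
    refine setIntegral_congr_fun measurableSet_Ioo (fun t ht => ?_)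
    have ht2 : |-t ^ 2| < 1 := by
      rw [abs_neg, abs_of_nonneg (by positivity)]
      nlinarith [ht.1, ht.2]
    have hg := (hasSum_geometric_of_abs_lt_one ht2).mul_right (Real.log t)
    have : (fun n : ℕ => (-1) ^ n * (t ^ (2 * n) * Real.log t)) = fun n : ℕ => (-t ^ 2) ^ n * Real.log t := by
      funext n
      rw [neg_pow (t ^ 2), pow_mul]
      ring
    simp only [this, hg.tsum_eq]
    rw [sub_neg_eq_add]
    ring
  · refine summable_odd.congr (fun n => ?_)
    have : ∫ t in Ioc (0:ℝ) 1, ‖(-1) ^ n * (t ^ (2 * n) * Real.log t)‖ = ∫ t in Ioc (0:ℝ) 1, -(t ^ (2 * n) * Real.log t) := by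
      refine setIntegral_congr_fun measurableSet_Ioc (fun t ht => ?_)
      simp only [norm_mul, norm_pow, norm_neg, norm_one, one_pow, one_mul, Real.norm_eq_abs]
      rw [abs_of_pos ht.1, abs_of_nonpos (Real.log_nonpos ht.1.le ht.2)]
      ring
    rw [this, ← intervalIntegral.integral_of_le zero_le_one, intervalIntegral.integral_neg, int_pow_log]
    ring

lemma cos_pos' {x : ℝ} (h0 : 0 ≤ x) (h1 : x ≤ π / 4) : 0 < Real.cos x :=
  Real.cos_pos_of_mem_Ioo ⟨by linarith [Real.pi_pos], by linarith [Real.pi_pos]⟩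

lemma log_tan_eq {x : ℝ} (h0 : 0 ≤ x) (h1 : x ≤ π / 4) :
    Real.log (Real.tan x) = Real.log (Real.sin x) - Real.log (Real.cos x) := by
  rcases h0.eq_or_lt with rfl | h
  · simp
  · rw [Real.tan_eq_sin_div_cos, Real.log_div]
    · exact (Real.sin_pos_of_pos_of_lt_pi h (by linarith [Real.pi_pos])).ne'
    · exact (cos_pos' h0 h1).ne'

open MeasureTheory Set in
lemma int_log_tan : ∫ x in (0:ℝ)..(π / 4), (Real.log (Real.sin x) - Real.log (Real.cos x)) = -catalanConst := by
  have hpi : (0:ℝ) ≤ π / 4 := by positivity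
  have himg : Real.arctan '' Icc 0 1 ⊆ Icc 0 (π / 4) := by
    rintro _ ⟨t, ht, rfl⟩
    refine ⟨?_, ?_⟩
    · rw [← Real.arctan_zero]; exact Real.arctan_strictMono.monotone ht.1
    · rw [← Real.arctan_one]; exact Real.arctan_strictMono.monotone ht.2
  have h := intervalIntegral.integral_comp_mul_deriv''' (a := 0) (b := 1) (f := Real.arctan)
    (f' := fun t => 1 / (1 + t ^ 2)) (g := fun x => Real.log (Real.tan x)) ?_ ?_ ?_ ?_ ?_
  · simp only [Function.comp, Real.tan_arctan, Real.arctan_zero, Real.arctan_one] at h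
    rw [int_catalan] at h
    rw [h]
    refine intervalIntegral.integral_congr (fun x hx => ?_)
    rw [uIcc_of_le hpi] at hx
    exact (log_tan_eq hx.1 hx.2).symm
  · exact Real.continuous_arctan.continuousOn
  · intro x _
    exact (Real.hasDerivAt_arctan x).hasDerivWithinAt
  · rintro _ ⟨t, ht, rfl⟩
    rw [min_eq_left zero_le_one, max_eq_right zero_le_one] at ht
    apply ContinuousAt.continuousWithinAt
    apply ContinuousAt.log
    · exact Real.continuousAt_tan.2 (Real.cos_arctan_pos t).ne'
    · rw [Real.tan_arctan]; exact ht.1.ne'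
  · rw [uIcc_of_le zero_le_one]
    refine IntegrableOn.mono_set ?_ himg
    have h1 : IntegrableOn (fun x => Real.log (Real.sin x) - Real.log (Real.cos x)) (Icc 0 (π / 4)) volume := by
      have := (intervalIntegrable_log_sin (a := 0) (b := π / 4)).sub (intervalIntegrable_log_cos (a := 0) (b := π / 4))
      rw [intervalIntegrable_iff_integrableOn_Icc_of_le hpi] at this
      exact this
    exact h1.congr_fun (fun x hx => (log_tan_eq hx.1 hx.2).symm) measurableSet_Icc
  · simp only [Function.comp, Real.tan_arctan]
    rw [uIcc_of_le zero_le_one, ← intervalIntegrable_iff_integrableOn_Icc_of_le zero_le_one]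
    exact int_log_div

lemma int_log_sin : ∫ x in (0:ℝ)..(π / 4), Real.log (Real.sin x) = -(π / 4) * Real.log 2 - catalanConst / 2 := by
  have h1 := int_log_tan
  have is : ∀ a b : ℝ, IntervalIntegrable (fun x => Real.log (Real.sin x)) MeasureTheory.volume a b :=
    fun a b => intervalIntegrable_log_sin
  have ic : ∀ a b : ℝ, IntervalIntegrable (fun x => Real.log (Real.cos x)) MeasureTheory.volume a b :=
    fun a b => intervalIntegrable_log_cos
  rw [intervalIntegral.integral_sub (is _ _) (ic _ _)] at h1
  have h2 := integral_log_sin_zero_pi_div_two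
  rw [← intervalIntegral.integral_add_adjacent_intervals (is 0 (π / 4)) (is (π / 4) (π / 2))] at h2
  have h3 : ∫ x in (0:ℝ)..(π / 4), Real.log (Real.cos x) = ∫ x in (π / 4)..(π / 2), Real.log (Real.sin x) := by
    have := intervalIntegral.integral_comp_sub_left (a := 0) (b := π / 4) (fun x => Real.log (Real.sin x)) (π / 2)
    simp only [Real.sin_pi_div_two_sub] at this
    rw [this]
    congr 1 <;> ring
  linarith

/-- real zeta values -/
noncomputable def zr (n : ℕ) : ℝ := ∑' k : ℕ, 1 / ((k:ℝ) + 1) ^ (2 * (n + 1))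

lemma zr_summable (n : ℕ) : Summable (fun k : ℕ => 1 / ((k:ℝ) + 1) ^ (2 * (n + 1))) := by
  have h := (summable_nat_add_iff 1).2 (Real.summable_one_div_nat_pow.2 (by omega : 1 < 2 * (n + 1)))
  refine h.congr (fun k => ?_)
  push_cast
  rfl

lemma zr_eq (n : ℕ) : riemannZeta (2 * (n + 1)) = (zr n : ℂ) := by
  have h := zeta_nat_eq_tsum_of_gt_one (by omega : 1 < 2 * (n + 1))
  push_cast at h
  have h0 : Summable (fun k : ℕ => 1 / (k:ℝ) ^ (2 * (n + 1))) :=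
    Real.summable_one_div_nat_pow.2 (by omega)
  have h1 := h0.tsum_eq_zero_add
  have h2 : zr n = ∑' k : ℕ, 1 / (k:ℝ) ^ (2 * (n + 1)) := by
    rw [h1, zr]
    simp
  rw [h, h2, Complex.ofReal_tsum]
  push_cast
  rfl

lemma zr_nonneg (n : ℕ) : 0 ≤ zr n := tsum_nonneg (fun k => by positivity)

lemma zr_le (n : ℕ) : zr n ≤ zr 0 := by
  refine (zr_summable n).tsum_le_tsum (fun k => ?_) (zr_summable 0)
  have : (1:ℝ) ≤ k + 1 := by
    have : (0:ℝ) ≤ k := by positivity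
    linarith
  gcongr 1 / ?_
  exact pow_le_pow_right₀ this (by omega)

open Filter Topology in
lemma key_sum {x : ℝ} (h0 : 0 < x) (h1 : x < 1) :
    ∑' n : ℕ, zr n * x ^ (2 * (n + 1)) / (n + 1) = Real.log (π * x) - Real.log (Real.sin (π * x)) := by
  have hpx : 0 < π * x := by positivity
  have hs : 0 < Real.sin (π * x) := Real.sin_pos_of_pos_of_lt_pi hpx (by nlinarith [Real.pi_pos])
  have hy : ∀ j : ℕ, 0 ≤ x ^ 2 / ((j:ℝ) + 1) ^ 2 ∧ x ^ 2 / ((j:ℝ) + 1) ^ 2 < 1 := by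
    intro j
    refine ⟨by positivity, ?_⟩
    rw [div_lt_one (by positivity)]
    have : (0:ℝ) ≤ j := by positivity
    nlinarith
  have hj : ∀ j : ℕ, HasSum (fun n : ℕ => (x ^ 2 / ((j:ℝ) + 1) ^ 2) ^ (n + 1) / ((n:ℝ) + 1))
      (-Real.log (1 - x ^ 2 / ((j:ℝ) + 1) ^ 2)) := by
    intro j
    exact Real.hasSum_pow_div_log_of_abs_lt_one (by rw [abs_of_nonneg (hy j).1]; exact (hy j).2)
  have hL : HasSum (fun j : ℕ => -Real.log (1 - x ^ 2 / ((j:ℝ) + 1) ^ 2))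
      (Real.log (π * x) - Real.log (Real.sin (π * x))) := by
    rw [hasSum_iff_tendsto_nat_of_nonneg]
    · have ht := ((Real.tendsto_euler_sin_prod x).log hs.ne').const_sub (Real.log (π * x))
      refine ht.congr (fun n => ?_)
      have hne : ∀ j ∈ Finset.range n, 1 - x ^ 2 / ((j:ℝ) + 1) ^ 2 ≠ 0 :=
        fun j _ => (sub_pos.2 (hy j).2).ne'
      rw [Real.log_mul hpx.ne' (Finset.prod_ne_zero_iff.2 hne), Real.log_prod hne, Finset.sum_neg_distrib]
      ring
    · intro j
      have := Real.log_nonpos (sub_nonneg.2 (hy j).2.le) (by linarith [(hy j).1])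
      linarith
  have hsum : Summable (Function.uncurry
      (fun j n : ℕ => (x ^ 2 / ((j:ℝ) + 1) ^ 2) ^ (n + 1) / ((n:ℝ) + 1))) := by
    rw [summable_prod_of_nonneg]
    · refine ⟨fun j => (hj j).summable, ?_⟩
      refine hL.summable.congr (fun j => ?_)
      exact (hj j).tsum_eq.symm
    · rintro ⟨j, n⟩
      simp only [Function.uncurry, Pi.zero_apply]
      positivity
  have hc := hsum.tsum_comm
  simp_rw [fun j => (hj j).tsum_eq] at hc
  rw [hL.tsum_eq] at hc
  rw [← hc]
  congr 1
  funext n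
  rw [zr, mul_div_assoc, ← tsum_mul_right]
  congr 1
  funext k
  rw [div_pow, ← pow_mul, ← pow_mul]
  field_simp

open MeasureTheory Set in
lemma real_sum : ∑' n : ℕ, zr n / ((n + 1) * (2 * n + 3) * 16 ^ (n + 1)) =
    2 * catalanConst / π - 1 + Real.log (π / 2) := by
  have hq : (0:ℝ) ≤ 1 / 4 := by norm_num
  have hI : ∀ n : ℕ, Integrable (fun x : ℝ => zr n * x ^ (2 * (n + 1)) / (n + 1)) (volume.restrict (Ioc 0 (1 / 4))) := by
    intro n
    have : IntervalIntegrable (fun x : ℝ => zr n * x ^ (2 * (n + 1)) / (n + 1)) volume 0 (1 / 4) :=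
      Continuous.intervalIntegrable (by fun_prop) _ _
    rwa [intervalIntegrable_iff_integrableOn_Ioc_of_le hq] at this
  have e1 : ∀ n : ℕ, ∫ x in Ioc (0:ℝ) (1 / 4), zr n * x ^ (2 * (n + 1)) / (n + 1) =
      (1 / 4) * (zr n / ((n + 1) * (2 * n + 3) * 16 ^ (n + 1))) := by
    intro n
    rw [← intervalIntegral.integral_of_le hq, intervalIntegral.integral_div, intervalIntegral.integral_const_mul,
      integral_pow, zero_pow (by omega), pow_succ (1 / 4 : ℝ), pow_mul]
    have : ((1:ℝ) / 4) ^ 2 = 1 / 16 := by norm_num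
    rw [this, div_pow, one_pow]
    push_cast
    have : (2 * ((n:ℝ) + 1) + 1) = 2 * n + 3 := by ring
    rw [this]
    field_simp
    ring
  have h := hasSum_integral_of_summable_integral_norm hI ?_
  · simp_rw [e1] at h
    have h2 := h.tsum_eq
    rw [tsum_mul_left] at h2
    have h3 : ∫ x in Ioc (0:ℝ) (1 / 4), ∑' n : ℕ, zr n * x ^ (2 * (n + 1)) / (n + 1) =
        ∫ x in Ioc (0:ℝ) (1 / 4), (fun u => Real.log u - Real.log (Real.sin u)) (π * x) := by
      refine setIntegral_congr_fun measurableSet_Ioc (fun x hx => ?_)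
      exact key_sum hx.1 (by linarith [hx.2])
    rw [h3, ← intervalIntegral.integral_of_le hq,
      intervalIntegral.integral_comp_mul_left (fun u => Real.log u - Real.log (Real.sin u)) Real.pi_ne_zero,
      mul_zero, mul_one_div, intervalIntegral.integral_sub intervalIntegral.intervalIntegrable_log'
        (by exact intervalIntegrable_log_sin), int_log_sin, integral_log, smul_eq_mul] at h2
    have l4 : Real.log (π / 4) = Real.log (π / 2) - Real.log 2 := by
      rw [← Real.log_div (by positivity) (by norm_num)]
      congr 1
      ring
    rw [l4] at h2
    have hp := Real.pi_ne_zero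
    have h5 := congrArg (fun y => 4 * y) h2
    simp only [← mul_assoc] at h5
    norm_num at h5
    rw [h5]
    field_simp
    ring
  · have e2 : ∀ n : ℕ, ∫ x in Ioc (0:ℝ) (1 / 4), ‖zr n * x ^ (2 * (n + 1)) / (n + 1)‖ =
      (1 / 4) * (zr n / ((n + 1) * (2 * n + 3) * 16 ^ (n + 1))) := by
      intro n
      rw [← e1]
      refine setIntegral_congr_fun measurableSet_Ioc (fun x hx => ?_)
      have := zr_nonneg n
      have := hx.1
      exact Real.norm_of_nonneg (by positivity)
    simp_rw [e2]
    apply Summable.mul_left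
    have hg : Summable (fun n : ℕ => zr 0 * (1 / 16 : ℝ) ^ n) :=
      (summable_geometric_of_lt_one (by norm_num) (by norm_num)).mul_left _
    refine Summable.of_nonneg_of_le (fun n => ?_) (fun n => ?_) hg
    · have := zr_nonneg n
      positivity
    · rw [div_pow, one_pow, mul_one_div]
      have hn : (0:ℝ) ≤ n := by positivity
      have h16 : (0:ℝ) < 16 ^ n := by positivity
      gcongr
      · exact zr_nonneg 0
      · exact zr_le n
      · rw [pow_succ]
        have : (1:ℝ) ≤ (n + 1) * (2 * n + 3) := by nlinarith
        nlinarith [mul_le_mul_of_nonneg_right this h16.le]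

theorem stmt8 :
    ∑' n : ℕ, riemannZeta (2 * (n + 1)) / ((n + 1) * (2 * n + 3) * 16 ^ (n + 1)) =
      ((2 * catalanConst / π - 1 + Real.log (π / 2) : ℝ) : ℂ) := by
  rw [← real_sum, Complex.ofReal_tsum]
  congr 1
  funext n
  rw [zr_eq]
  push_cast
  rfl
end

section
/- The series ∑_{n=1}^∞ ζ(2n)/(n(2n+3)·4^n) equals -3ζ(3)/(2π²) + (1/3)·log π - 1/9. -/
open Real Filter Topology

lemma alt_log_two : Tendsto (fun n : ℕ => ∑ i ∈ Finset.range n, (-1 : ℝ) ^ i * (1 / ((i : ℝ) + 1)))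
    atTop (𝓝 (Real.log 2)) := by
  have hanti : Antitone (fun i : ℕ => 1 / ((i : ℝ) + 1)) := by
    intro a b hab
    have : (a : ℝ) ≤ b := by exact_mod_cast hab
    simp only
    gcongr
  obtain ⟨l, hl⟩ := hanti.tendsto_alternating_series_of_tendsto_zero
    tendsto_one_div_add_atTop_nhds_zero_nat
  have hab := Real.tendsto_tsum_powerSeries_nhdsWithin_lt hl
  have h2 : Tendsto (fun x : ℝ => Real.log (1 + x) / x) (𝓝[<] 1) (𝓝 (Real.log 2)) := by
    have : ContinuousAt (fun x : ℝ => Real.log (1 + x) / x) 1 := by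
      refine ContinuousAt.div (ContinuousAt.log (by fun_prop) (by norm_num)) continuousAt_id (by norm_num)
    have h := this.tendsto.mono_left (nhdsWithin_le_nhds (s := Set.Iio 1))
    norm_num at h
    exact h
  have : l = Real.log 2 := by
    refine tendsto_nhds_unique hab (h2.congr' ?_)
    have : Set.Ioo (0 : ℝ) 1 ∈ 𝓝[<] (1 : ℝ) := Ioo_mem_nhdsLT (by norm_num)
    filter_upwards [this] with x hx
    have h := hasSum_pow_div_log_of_abs_lt_one (x := -x) (by rw [abs_neg, abs_of_pos hx.1]; exact hx.2)
    have h3 := h.mul_left (-1 / x)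
    have hx0 := hx.1.ne'
    rw [show -1 / x * -Real.log (1 - -x) = Real.log (1 + x) / x by rw [sub_neg_eq_add]; ring] at h3
    rw [← h3.tsum_eq]
    congr 1; ext n
    rw [pow_succ, neg_pow x n]; field_simp
  rw [← this]; exact hl

lemma eta_three : HasSum (fun i : ℕ => (-1 : ℝ) ^ i * (1 / ((i : ℝ) + 1) ^ 3))
    (3 / 4 * ∑' i : ℕ, 1 / ((i : ℝ) + 1) ^ 3) := by
  have hs : Summable (fun i : ℕ => 1 / ((i : ℝ) + 1) ^ 3) := by
    have := (summable_nat_add_iff 1).2 (Real.summable_one_div_nat_pow (p := 3)|>.2 (by norm_num))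
    simpa using this
  set Z := ∑' i : ℕ, 1 / ((i : ℝ) + 1) ^ 3 with hZ
  have hodd : HasSum (fun i : ℕ => 1 / (((2 * i + 1 : ℕ) : ℝ) + 1) ^ 3) (Z / 8) := by
    have := hs.hasSum.mul_left (1 / 8)
    rw [← hZ, show 1 / 8 * Z = Z / 8 by ring] at this
    convert! this using 1
    ext i
    push_cast
    rw [show (2 * (i : ℝ) + 1 + 1) = 2 * (i + 1) by ring, mul_pow]
    field_simp
    norm_num
  have heven : Summable (fun i : ℕ => 1 / (((2 * i : ℕ) : ℝ) + 1) ^ 3) :=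
    hs.comp_injective (i := fun i : ℕ => 2 * i) (fun a b h => by simpa using h)
  obtain ⟨E, hE⟩ := heven
  have h1 := HasSum.even_add_odd (f := fun i : ℕ => 1 / ((i : ℝ) + 1) ^ 3) hE hodd
  have h2 := h1.unique hs.hasSum
  rw [← hZ] at h2
  have h3 := HasSum.even_add_odd (f := fun i : ℕ => (-1 : ℝ) ^ i * (1 / ((i : ℝ) + 1) ^ 3)) 
    (m := E) (m' := - (Z / 8)) (by
      convert! hE using 1
      ext i
      rw [pow_mul]; norm_num) (by
      convert! hodd.neg using 1
      ext i
      rw [pow_succ, pow_mul]; norm_num)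
  have h4 : E + -(Z / 8) = 3 / 4 * Z := by linarith
  rwa [h4] at h3

lemma summ_pow (n : ℕ) : Summable (fun k : ℕ => 1 / ((k : ℝ) + 1) ^ (2 * (n + 1))) := by
  have := (summable_nat_add_iff 1).2
    ((Real.summable_one_div_nat_pow (p := 2 * (n + 1))).2 (by omega))
  simpa using this

lemma log_sinc_series {x : ℝ} (hx0 : 0 < x) (hx : x ≤ 1 / 2) :
    HasSum (fun n : ℕ => (∑' k : ℕ, 1 / ((k : ℝ) + 1) ^ (2 * (n + 1))) * x ^ (2 * (n + 1)) / (n + 1))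
      (-Real.log (sinc (π * x))) := by
  set f : ℕ × ℕ → ℝ := fun p => (x ^ 2 / ((p.1 : ℝ) + 1) ^ 2) ^ (p.2 + 1) / (p.2 + 1) with hf
  have hfn : 0 ≤ f := fun p => by simp only [hf, Pi.zero_apply]; positivity
  have hq : ∀ k : ℕ, x ^ 2 / ((k : ℝ) + 1) ^ 2 < 1 := fun k => by
    rw [div_lt_one (by positivity)]
    have : (0 : ℝ) ≤ k := Nat.cast_nonneg k
    nlinarith
  have hk : ∀ k : ℕ, HasSum (fun n : ℕ => f (k, n)) (-Real.log (1 - x ^ 2 / ((k : ℝ) + 1) ^ 2)) := by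
    intro k
    have h1 : |x ^ 2 / ((k : ℝ) + 1) ^ 2| < 1 := by
      rw [abs_of_nonneg (by positivity)]
      exact hq k
    have h2 := hasSum_pow_div_log_of_abs_lt_one h1
    simp only [hf]
    exact h2
  have hA : HasSum (fun k : ℕ => -Real.log (1 - x ^ 2 / ((k : ℝ) + 1) ^ 2))
      (-Real.log (sinc (π * x))) := by
    rw [hasSum_iff_tendsto_nat_of_nonneg]
    · have h := (Real.tendsto_euler_sin_prod x).div_const (π * x)
      have hpx : 0 < π * x := by positivity
      have hs : 0 < Real.sin (π * x) := Real.sin_pos_of_pos_of_lt_pi hpx (by nlinarith [Real.pi_pos])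
      rw [← sinc_of_ne_zero hpx.ne'] at h
      have h2 := (h.log (by rw [sinc_of_ne_zero hpx.ne']; positivity)).neg
      refine h2.congr fun n => ?_
      rw [mul_div_cancel_left₀ _ hpx.ne', Real.log_prod, Finset.sum_neg_distrib]
      intro i _
      linarith [hq i]
    · intro k
      exact (hk k).nonneg (fun n => hfn (k, n))
  have hfs : Summable f := by
    rw [summable_prod_of_nonneg hfn]
    refine ⟨fun k => (hk k).summable, ?_⟩
    simp_rw [fun k => (hk k).tsum_eq]
    exact hA.summable
  have hfA : HasSum f (-Real.log (sinc (π * x))) := by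
    have := hfs.hasSum.prod_fiberwise hk
    rw [hA.unique this]
    exact hfs.hasSum
  have hsw := (Equiv.prodComm ℕ ℕ).hasSum_iff.2 hfA
  refine hsw.prod_fiberwise fun n => ?_
  have := (summ_pow n).hasSum.mul_right (x ^ (2 * (n + 1)) / ((n : ℝ) + 1))
  rw [← mul_div_assoc] at this
  convert! this using 1
  ext k
  simp only [hf, Function.comp, Equiv.prodComm_apply, Prod.swap]
  rw [div_pow, ← pow_mul, ← pow_mul]
  field_simp

lemma series_int :
    HasSum (fun n : ℕ => (∑' k : ℕ, 1 / ((k : ℝ) + 1) ^ (2 * (n + 1))) /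
        (((n : ℝ) + 1) * (2 * n + 5) * 4 ^ (n + 1)))
      (8 * ∫ x in (0 : ℝ)..(1 / 2), x ^ 2 * (-Real.log (sinc (π * x)))) := by
  set z : ℕ → ℝ := fun n => ∑' k : ℕ, 1 / ((k : ℝ) + 1) ^ (2 * (n + 1)) with hz
  have hz0 : ∀ n, 0 ≤ z n := fun n => tsum_nonneg fun k => by positivity
  have hb := (log_sinc_series (x := 1 / 2) (by norm_num) le_rfl).summable
  have key := intervalIntegral.hasSum_integral_of_dominated_convergence (μ := MeasureTheory.volume)
    (a := (0 : ℝ)) (b := 1 / 2)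
    (F := fun (n : ℕ) (x : ℝ) => x ^ 2 * (z n * x ^ (2 * (n + 1)) / (n + 1)))
    (f := fun x => x ^ 2 * (-Real.log (sinc (π * x))))
    (fun n _ => z n * (1 / 2) ^ (2 * (n + 1)) / (n + 1))
    (fun n => by
      apply Continuous.aestronglyMeasurable
      fun_prop)
    (fun n => by
      refine Filter.Eventually.of_forall fun x hx => ?_
      rw [Set.uIoc_of_le (by norm_num)] at hx
      have h0 := hx.1.le
      have hzn := hz0 n
      rw [Real.norm_of_nonneg (by positivity)]
      have h1 : x ^ 2 ≤ 1 := by nlinarith [hx.2]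
      have h2 : z n * x ^ (2 * (n + 1)) / (n + 1) ≤ z n * (1 / 2) ^ (2 * (n + 1)) / (n + 1) := by
        gcongr
        exact hx.2
      have h3 : 0 ≤ z n * x ^ (2 * (n + 1)) / (n + 1) := by positivity
      nlinarith)
    (Filter.Eventually.of_forall fun x hx => hb)
    (by simp)
    (by
      refine Filter.Eventually.of_forall fun x hx => ?_
      rw [Set.uIoc_of_le (by norm_num)] at hx
      exact (log_sinc_series hx.1 hx.2).mul_left _)
  convert! key.mul_left 8 using 1
  ext n
  have : (fun x : ℝ => x ^ 2 * (z n * x ^ (2 * (n + 1)) / (n + 1))) =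
      fun x => (z n / (n + 1)) * x ^ (2 * n + 4) := by
    ext x; ring
  rw [this, intervalIntegral.integral_const_mul, integral_pow]
  push_cast
  rw [show (1 / 2 : ℝ) ^ (2 * n + 4 + 1) = (1 / 8) * (1 / 4 ^ (n + 1)) by
    rw [show 2 * n + 4 + 1 = 2 * (n + 1) + 3 by ring, pow_add, pow_mul, div_pow, div_pow, div_pow]
    norm_num; ring]
  have : (2 * (n : ℝ) + 4 + 1) = 2 * n + 5 := by ring
  rw [this]
  change z n / _ = _
  field_simp
  simp

lemma dirichlet (x : ℝ) (N : ℕ) : Real.cos (π * x) =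
    2 * (∑ k ∈ Finset.range N, Real.sin (2 * π * (k + 1) * x)) * Real.sin (π * x)
      + Real.cos ((2 * N + 1) * π * x) := by
  induction N with
  | zero => simp
  | succ n ih =>
    rw [Finset.sum_range_succ, ih]
    have h1 : ((2 * n + 1) * π * x : ℝ) = 2 * π * (n + 1) * x - π * x := by ring
    have h2 : ((2 * ((n + 1 : ℕ) : ℝ) + 1) * π * x : ℝ) = 2 * π * (n + 1) * x + π * x := by
      push_cast; ring
    rw [h1, h2, Real.cos_sub, Real.cos_add]
    ring

lemma int_sin (k : ℕ) : ∫ x in (0 : ℝ)..(1 / 2), x ^ 3 * Real.sin (2 * π * (k + 1) * x) =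
    (-1) ^ k * (1 / (16 * π * (k + 1)) - 3 / (8 * π ^ 3 * (k + 1) ^ 3)) := by
  set a : ℝ := 2 * π * (k + 1) with ha
  have ha0 : a ≠ 0 := by positivity
  have hd : ∀ x ∈ Set.uIcc (0 : ℝ) (1 / 2), HasDerivAt (fun x : ℝ => -x ^ 3 * Real.cos (a * x) / a
      + 3 * x ^ 2 * Real.sin (a * x) / a ^ 2 + 6 * x * Real.cos (a * x) / a ^ 3
      - 6 * Real.sin (a * x) / a ^ 4) (x ^ 3 * Real.sin (a * x)) x := by
    intro x _
    have hl : HasDerivAt (fun x : ℝ => a * x) a x := by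
      simpa using (hasDerivAt_id x).const_mul a
    have hc := hl.cos
    have hs := hl.sin
    have h1 := (((hasDerivAt_pow 3 x).neg.mul hc).div_const a)
    have h2 := ((((hasDerivAt_pow 2 x).const_mul 3).mul hs).div_const (a ^ 2))
    have h3 := ((((hasDerivAt_id x).const_mul 6).mul hc).div_const (a ^ 3))
    have h4 := ((hs.const_mul 6).div_const (a ^ 4))
    refine (((h1.add h2).add h3).sub h4).congr_deriv ?_
    simp
    field_simp
    ring
  rw [intervalIntegral.integral_eq_sub_of_hasDerivAt hd
    (Continuous.intervalIntegrable (by fun_prop) _ _)]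
  have e : a * (1 / 2) = ((k + 1 : ℕ) : ℝ) * π := by rw [ha]; push_cast; ring
  rw [e, Real.sin_nat_mul_pi, Real.cos_nat_mul_pi, pow_succ]
  simp
  rw [ha]
  field_simp
  ring

lemma riem_leb (h : ℝ → ℝ) (hh : ContinuousOn h (Set.Icc 0 (1 / 2))) :
    Tendsto (fun N : ℕ => ∫ x in (0 : ℝ)..(1 / 2), h x * Real.cos ((2 * N + 1) * π * x)) atTop (𝓝 0) := by
  have hRL := Real.tendsto_integral_exp_smul_cocompact
    (Set.indicator (Set.Ioc (0 : ℝ) (1 / 2)) (fun x => (h x : ℂ)))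
  have hw : Tendsto (fun N : ℕ => ((2 * N + 1) / 2 : ℝ)) atTop (cocompact ℝ) := by
    refine Tendsto.mono_right ?_ atTop_le_cocompact
    refine tendsto_atTop_mono (fun n => ?_) tendsto_natCast_atTop_atTop
    linarith
  have h1 := (Complex.continuous_re.tendsto 0).comp (hRL.comp hw)
  simp only [Complex.zero_re] at h1
  refine h1.congr fun N => ?_
  simp only [Function.comp]
  have e1 : (fun v : ℝ => Real.fourierChar (-(v * ((2 * N + 1) / 2 : ℝ))) •
      Set.indicator (Set.Ioc (0 : ℝ) (1 / 2)) (fun x => (h x : ℂ)) v) =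
      Set.indicator (Set.Ioc (0 : ℝ) (1 / 2))
        (fun v => (Real.fourierChar (-(v * ((2 * N + 1) / 2 : ℝ))) : ℂ) * (h v : ℂ)) := by
    ext v
    by_cases hv : v ∈ Set.Ioc (0 : ℝ) (1 / 2)
    · rw [Set.indicator_of_mem hv, Set.indicator_of_mem hv, Circle.smul_def, smul_eq_mul]
    · rw [Set.indicator_of_notMem hv, Set.indicator_of_notMem hv, smul_zero]
  rw [e1, MeasureTheory.integral_indicator measurableSet_Ioc,
    intervalIntegral.integral_of_le (by norm_num)]
  have hint : MeasureTheory.Integrable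
      (fun v => (Real.fourierChar (-(v * ((2 * N + 1) / 2 : ℝ))) : ℂ) * (h v : ℂ))
      (MeasureTheory.volume.restrict (Set.Ioc (0 : ℝ) (1 / 2))) := by
    have : ContinuousOn (fun v => (Real.fourierChar (-(v * ((2 * N + 1) / 2 : ℝ))) : ℂ) * (h v : ℂ))
        (Set.Icc 0 (1 / 2)) := by
      refine ContinuousOn.mul ?_ (Complex.continuous_ofReal.comp_continuousOn hh)
      simp only [Real.fourierChar_apply]
      fun_prop
    exact (this.integrableOn_Icc).mono_set Set.Ioc_subset_Icc_self
  have h2 := integral_re hint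
  simp only [RCLike.re_to_complex] at h2
  rw [← h2]
  congr 1
  ext v
  rw [Real.fourierChar_apply, Complex.re_mul_ofReal, Complex.exp_ofReal_mul_I_re, mul_comm]
  congr 1
  rw [← Real.cos_neg]
  congr 1
  ring

lemma sinc_pos' {x : ℝ} (hx : x ∈ Set.Icc (0 : ℝ) (1 / 2)) : 0 < sinc (π * x) := by
  rcases hx.1.eq_or_lt with h | h
  · rw [← h]; simp
  · have hpx : 0 < π * x := by positivity
    have hs : 0 < Real.sin (π * x) :=
      Real.sin_pos_of_pos_of_lt_pi hpx (by nlinarith [Real.pi_pos, hx.2])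
    rw [sinc_of_ne_zero hpx.ne']; positivity

lemma h_cont : ContinuousOn (fun x : ℝ => x ^ 2 / (π * sinc (π * x))) (Set.Icc 0 (1 / 2)) := by
  refine ContinuousOn.div (by fun_prop) ?_ ?_
  · exact (continuous_const.mul (Real.continuous_sinc.comp (by fun_prop))).continuousOn
  · intro x hx
    have := sinc_pos' hx
    positivity

lemma h_sin {x : ℝ} (hx : x ∈ Set.Icc (0 : ℝ) (1 / 2)) :
    x ^ 2 / (π * sinc (π * x)) * Real.sin (π * x) = x ^ 3 := by
  have h1 := sinc_pos' hx
  have h2 : Real.sin (π * x) = π * x * sinc (π * x) := by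
    rcases hx.1.eq_or_lt with h | h
    · rw [← h]; simp
    · have hpx : 0 < π * x := by positivity
      rw [sinc_of_ne_zero hpx.ne']; field_simp
  rw [h2]
  generalize sinc (π * x) = s at h1
  field_simp

lemma J_val : ∫ x in (0 : ℝ)..(1 / 2), x ^ 2 / (π * sinc (π * x)) * Real.cos (π * x) =
    Real.log 2 / (8 * π) - 9 / (16 * π ^ 3) * ∑' i : ℕ, 1 / ((i : ℝ) + 1) ^ 3 := by
  have hR := riem_leb _ h_cont
  have hS : Tendsto (fun N : ℕ => 1 / (8 * π) * (∑ i ∈ Finset.range N, (-1 : ℝ) ^ i * (1 / ((i : ℝ) + 1)))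
      - 3 / (4 * π ^ 3) * (∑ i ∈ Finset.range N, (-1 : ℝ) ^ i * (1 / ((i : ℝ) + 1) ^ 3))
      + ∫ x in (0 : ℝ)..(1 / 2), x ^ 2 / (π * sinc (π * x)) * Real.cos ((2 * N + 1) * π * x)) atTop
      (𝓝 (1 / (8 * π) * Real.log 2 - 3 / (4 * π ^ 3) * (3 / 4 * ∑' i : ℕ, 1 / ((i : ℝ) + 1) ^ 3) + 0)) :=
    ((alt_log_two.const_mul _).sub (eta_three.tendsto_sum_nat.const_mul _)).add hR
  have hc : ∀ N : ℕ, ∫ x in (0 : ℝ)..(1 / 2), x ^ 2 / (π * sinc (π * x)) * Real.cos (π * x) =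
      1 / (8 * π) * (∑ i ∈ Finset.range N, (-1 : ℝ) ^ i * (1 / ((i : ℝ) + 1)))
      - 3 / (4 * π ^ 3) * (∑ i ∈ Finset.range N, (-1 : ℝ) ^ i * (1 / ((i : ℝ) + 1) ^ 3))
      + ∫ x in (0 : ℝ)..(1 / 2), x ^ 2 / (π * sinc (π * x)) * Real.cos ((2 * N + 1) * π * x) := by
    intro N
    have e : ∫ x in (0 : ℝ)..(1 / 2), x ^ 2 / (π * sinc (π * x)) * Real.cos (π * x) =
        ∫ x in (0 : ℝ)..(1 / 2), ((∑ k ∈ Finset.range N, 2 * (x ^ 3 * Real.sin (2 * π * (k + 1) * x)))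
          + x ^ 2 / (π * sinc (π * x)) * Real.cos ((2 * N + 1) * π * x)) := by
      refine intervalIntegral.integral_congr fun x hx => ?_
      rw [Set.uIcc_of_le (by norm_num)] at hx
      rw [dirichlet x N, ← Finset.mul_sum, ← Finset.mul_sum, ← h_sin hx]
      ring
    rw [e, intervalIntegral.integral_add, intervalIntegral.integral_finsetSum]
    · simp_rw [intervalIntegral.integral_const_mul, int_sin]
      rw [Finset.mul_sum, Finset.mul_sum, ← Finset.sum_sub_distrib]
      congr 1
      refine Finset.sum_congr rfl fun i _ => ?_
      field_simp
      ring
    · intro i _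
      exact Continuous.intervalIntegrable (by fun_prop) _ _
    · exact Continuous.intervalIntegrable (by fun_prop) _ _
    · refine ContinuousOn.intervalIntegrable ?_
      rw [Set.uIcc_of_le (by norm_num)]
      exact h_cont.mul (by fun_prop)
  have := tendsto_nhds_unique (hS.congr fun N => (hc N).symm) tendsto_const_nhds
  rw [← this]
  ring

lemma logsinc_cont : ContinuousOn (fun x : ℝ => Real.log (sinc (π * x))) (Set.Icc 0 (1 / 2)) := by
  refine ContinuousOn.log ?_ fun x hx => (sinc_pos' hx).ne'
  exact (Real.continuous_sinc.comp (by fun_prop)).continuousOn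

lemma main_int : 8 * ∫ x in (0 : ℝ)..(1 / 2), x ^ 2 * (-Real.log (sinc (π * x))) =
    -3 * (∑' i : ℕ, 1 / ((i : ℝ) + 1) ^ 3) / (2 * π ^ 2) + (1 / 3) * Real.log π - 1 / 9 := by
  have i1 : IntervalIntegrable (fun x : ℝ => x ^ 2 * (-Real.log (sinc (π * x))))
      MeasureTheory.volume 0 (1 / 2) := by
    refine ContinuousOn.intervalIntegrable ?_
    rw [Set.uIcc_of_le (by norm_num)]
    exact (by fun_prop : ContinuousOn (fun x : ℝ => x ^ 2) _).mul logsinc_cont.neg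
  have i2 : IntervalIntegrable (fun x : ℝ => x ^ 2 / (π * sinc (π * x)) * Real.cos (π * x))
      MeasureTheory.volume 0 (1 / 2) := by
    refine ContinuousOn.intervalIntegrable ?_
    rw [Set.uIcc_of_le (by norm_num)]
    exact h_cont.mul (by fun_prop)
  have i3 : IntervalIntegrable (fun x : ℝ => x ^ 2) MeasureTheory.volume 0 (1 / 2) :=
    Continuous.intervalIntegrable (by fun_prop) _ _
  have hF := intervalIntegral.integral_eq_sub_of_hasDerivAt_of_le (a := (0 : ℝ)) (b := 1 / 2)
    (f := fun x => x ^ 3 / 3 * (-Real.log (sinc (π * x))))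
    (f' := fun x => x ^ 2 * (-Real.log (sinc (π * x)))
      - (π / 3 * (x ^ 2 / (π * sinc (π * x)) * Real.cos (π * x)) - 1 / 3 * x ^ 2))
    (by norm_num)
    ((by fun_prop : ContinuousOn (fun x : ℝ => x ^ 3 / 3) _).mul logsinc_cont.neg)
    (by
      intro x hx
      have hx0 := hx.1
      have hpx : 0 < π * x := by positivity
      have hs : 0 < Real.sin (π * x) :=
        Real.sin_pos_of_pos_of_lt_pi hpx (by nlinarith [Real.pi_pos, hx.2])
      have hl : HasDerivAt (fun x : ℝ => π * x) π x := by
        simpa using (hasDerivAt_id x).const_mul π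
      have hd : HasDerivAt (fun x : ℝ => Real.sin (π * x) / (π * x))
        ((Real.cos (π * x) * π * (π * x) - Real.sin (π * x) * π) / (π * x) ^ 2) x :=
        hl.sin.div hl hpx.ne'
      have hlog := hd.log (by positivity)
      have hP := ((hasDerivAt_pow 3 x).div_const 3).mul hlog.neg
      have hP2 := hP.congr_of_eventuallyEq (f₁ := fun x => x ^ 3 / 3 * (-Real.log (sinc (π * x)))) (by
        filter_upwards [lt_mem_nhds hx0] with y hy
        have : π * y ≠ 0 := by positivity
        simp [sinc_of_ne_zero this])
      refine hP2.congr_deriv ?_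
      rw [sinc_of_ne_zero hpx.ne']
      simp only [Pi.neg_apply]
      field_simp
      push_cast
      ring)
    (i1.sub ((i2.const_mul _).sub (i3.const_mul _)))
  rw [intervalIntegral.integral_sub i1 ((i2.const_mul _).sub (i3.const_mul _)),
    intervalIntegral.integral_sub (i2.const_mul _) (i3.const_mul _),
    intervalIntegral.integral_const_mul, intervalIntegral.integral_const_mul, J_val,
    integral_pow] at hF
  have hv : Real.log (sinc (π * (1 / 2))) = Real.log 2 - Real.log π := by
    rw [sinc_of_ne_zero (by positivity), show π * (1 / 2) = π / 2 by ring, Real.sin_pi_div_two,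
      one_div_div, Real.log_div (by norm_num) (by positivity)]
  rw [hv] at hF
  rw [sub_eq_iff_eq_add.1 hF]
  norm_num
  field_simp
  ring

theorem stmt9 :
    ∑' n : ℕ, riemannZeta (2 * (n + 1)) / ((n + 1) * (2 * n + 5) * 4 ^ (n + 1)) =
      -3 * riemannZeta 3 / (2 * (π : ℂ) ^ 2) + (1 / 3) * (Real.log π : ℂ) - 1 / 9 := by
  have hz : ∀ m : ℕ, 1 < m → riemannZeta m = ((∑' k : ℕ, 1 / ((k : ℝ) + 1) ^ m : ℝ) : ℂ) := by
    intro m hm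
    rw [zeta_eq_tsum_one_div_nat_add_one_cpow (by simpa using hm)]
    push_cast
    simp
  have h := series_int
  rw [main_int] at h
  have h2 := (Complex.hasSum_ofReal.2 h).tsum_eq
  have h3 := hz 3 (by norm_num)
  push_cast at h2 h3
  rw [h3, ← h2]
  congr 1
  ext n
  have h4 := hz (2 * (n + 1)) (by omega)
  push_cast at h4
  rw [h4]
end
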